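/- Let k ≥ 1 and let φ = ∃X.∀Y.ψ be a quantified Boolean formula where X = {x₁,…,xₙ} and Y = {y₁,…,y_m} are disjoint sets of variables and ψ = δ₁ ∨ … ∨ δ_u is a 3DNF formula with δ_ℓ = l^ℓ₁ ∧ l^ℓ₂ ∧ l^ℓ₃ for each 1 ≤ ℓ ≤ u. Let σ map literals to atoms by σ(x_i) = x_i, σ(¬x_i) = v_i, σ(y_j) = y_j, σ(¬y_j) = z_j, and let P be the disjunctive logic program over the atoms X ∪ Y ∪ {v₁,…,vₙ} ∪ {z₁,…,z_m} ∪ {w} ∪ {x^j_i : 1 ≤ j ≤ k, 1 ≤ i ≤ n} consisting of the rules: (x^j_1 ∨ … ∨ x^j_n ←) for 1 ≤ j ≤ k; (← x^j_i, x^{j′}_i) for 1 ≤ i ≤ n and 1 ≤ j < j′ ≤ k; (y_i ∨ z_i ←) and (w ← y_i, z_i) and (y_i ← w) and (z_i ← w) for 1 ≤ i ≤ m; (x_i ← w) and (v_i ← w) for 1 ≤ i ≤ n; (x_i ← x^j_i) for 1 ≤ i ≤ n and 1 ≤ j ≤ k; (v_i ← not x^1_i, …, not x^k_i) for 1 ≤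 i ≤ n; (w ← σ(l^ℓ₁), σ(l^ℓ₂), σ(l^ℓ₃)) for 1 ≤ ℓ ≤ u; and (w ← not w). Then Comp(P) = {w} ∪ {x_i, v_i : 1 ≤ i ≤ n} ∪ {y_i, z_i : 1 ≤ i ≤ m}, the contingent rules of P are exactly the k rules (x^j_1 ∨ … ∨ x^j_n ←), and the following are equivalent: (1) there exists a truth assignment α : X → Bool of weight k such that for every truth assignment β : Y → Bool the assignment α ∪ β satisfies ψ; (2) P has an answer set. -/

import Mathlib

/-- A rule of a disjunctive logic program: `head` is the (disjunctive) head,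
`pos` the positive body atoms and `neg` the (default-negated) negative body atoms. -/
structure Rule (A : Type) where
  head : Finset A
  pos : Finset A
  neg : Finset A

namespace Rule
variable {A : Type}

/-- A rule is normal if its head contains at most one atom. -/
def isNormal (r : Rule A) : Prop := r.head.card ≤ 1

/-- A rule is disjunctive if its head contains more than one atom. -/
def isDisjunctive (r : Rule A) : Prop := 1 < r.head.card

/-- A rule is negation-free if its negative body is empty. -/
def negFree (r : Rule A) : Prop := r.neg = ∅

/-- A set `M` of atoms satisfies a (negation-free) rule if, whenever all atoms of the
positive body belong to `M`, some head atom belongs to `M`. -/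
def satisfiedBy (r : Rule A) (M : Set A) : Prop :=
  (∀ b ∈ r.pos, b ∈ M) → ∃ a ∈ r.head, a ∈ M

end Rule

/-- The set of atoms occurring in a program. -/
def progAtoms {A : Type} (P : Set (Rule A)) : Set A :=
  {a | ∃ r ∈ P, a ∈ r.head ∨ a ∈ r.pos ∨ a ∈ r.neg}

/-- `M` is a model of the (negation-free) program `P`. -/
def isModel {A : Type} (P : Set (Rule A)) (M : Set A) : Prop :=
  ∀ r ∈ P, r.satisfiedBy M

/-- `M` is a minimal model of the (negation-free) program `P`. -/
def isMinimalModel {A : Type} (P : Set (Rule A)) (M : Set A) : Prop :=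
  isModel P M ∧ ∀ M' : Set A, M' ⊂ M → ¬ isModel P M'

/-- The GL reduct of `P` with respect to `M`: remove every rule whose negative body
meets `M`, and delete the negative bodies of the remaining rules. -/
def reduct {A : Type} (P : Set (Rule A)) (M : Set A) : Set (Rule A) :=
  {r' | ∃ r ∈ P, (∀ c ∈ r.neg, c ∉ M) ∧ r' = ⟨r.head, r.pos, ∅⟩}

/-- An answer set of `P` is a set `M ⊆ Atoms(P)` that is a subset-minimal model
of the reduct `P^M`. -/
def isAnswerSet {A : Type} (P : Set (Rule A)) (M : Set A) : Prop :=
  M ⊆ progAtoms P ∧ isMinimalModel (reduct P M) M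

/-- The compulsory atoms `Comp(P)`: the smallest set of atoms such that (i) if
`(w ← not w)` is a rule of `P` then `w` is compulsory, and (ii) if `(b ← a₁,…,aₙ)`
is a normal negation-free rule of `P` all of whose body atoms are compulsory,
then `b` is compulsory. -/
inductive Compulsory {A : Type} (P : Set (Rule A)) : A → Prop
  | loop (w : A) : (⟨{w}, ∅, {w}⟩ : Rule A) ∈ P → Compulsory P w
  | rule (r : Rule A) (b : A) : r ∈ P → r.head = {b} → r.neg = ∅ →
      (∀ a ∈ r.pos, Compulsory P a) → Compulsory P b

/-- The contingent atoms `Cont(P) = Atoms(P) ∖ Comp(P)`. -/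
def ContingentAtoms {A : Type} (P : Set (Rule A)) : Set A :=
  progAtoms P \ {a | Compulsory P a}

/-- A rule of `P` is contingent if its head contains a contingent atom. -/
def isContingentRule {A : Type} (P : Set (Rule A)) (r : Rule A) : Prop :=
  r ∈ P ∧ ∃ a ∈ r.head, a ∈ ContingentAtoms P

/-- The weight of a truth assignment: the number of variables it maps to true. -/
def weight {X : Type} [Fintype X] (α : X → Bool) : ℕ :=
  (Finset.univ.filter fun x => α x = true).card

/-- The atoms of the constructed program: the variables `x₁,…,xₙ` and `y₁,…,y_m` of the
quantified Boolean formula, the fresh atoms `v₁,…,vₙ`, `z₁,…,z_m`, `w`, and `x^j_i`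
for `1 ≤ j ≤ k`, `1 ≤ i ≤ n`. -/
inductive Atom1 (n m k : ℕ) : Type
  | x (i : Fin n)
  | y (i : Fin m)
  | v (i : Fin n)
  | z (i : Fin m)
  | w
  | xj (j : Fin k) (i : Fin n)
deriving DecidableEq

/-- The mapping `σ` from literals over `X ∪ Y` to atoms:
`σ(x_i) = x_i`, `σ(¬x_i) = v_i`, `σ(y_i) = y_i`, `σ(¬y_i) = z_i`. -/
def sigma1 {n m : ℕ} (k : ℕ) (l : (Fin n ⊕ Fin m) × Bool) : Atom1 n m k :=
  match l with
  | (Sum.inl i, true) => Atom1.x i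
  | (Sum.inl i, false) => Atom1.v i
  | (Sum.inr i, true) => Atom1.y i
  | (Sum.inr i, false) => Atom1.z i

/-- The contingent "guessing" rule `(x^j_1 ∨ … ∨ x^j_n ←)`. -/
def guessRule1 (n m : ℕ) {k : ℕ} (j : Fin k) : Rule (Atom1 n m k) :=
  ⟨Finset.univ.image (Atom1.xj j), ∅, ∅⟩

/-- The disjunctive logic program `P` constructed from the 3DNF formula
`ψ = δ₁ ∨ … ∨ δ_u` (given by the literal table `δ`). -/
def prog1 (k : ℕ) {n m u : ℕ} (δ : Fin u → Fin 3 → (Fin n ⊕ Fin m) × Bool) :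
    Set (Rule (Atom1 n m k)) :=
  {r |
    (∃ j : Fin k, r = guessRule1 n m j)
    ∨ (∃ (i : Fin n) (j j' : Fin k), j < j' ∧
        r = ⟨∅, {Atom1.xj j i, Atom1.xj j' i}, ∅⟩)
    ∨ (∃ i : Fin m, r = ⟨{Atom1.y i, Atom1.z i}, ∅, ∅⟩)
    ∨ (∃ i : Fin m, r = ⟨{Atom1.w}, {Atom1.y i, Atom1.z i}, ∅⟩)
    ∨ (∃ i : Fin m, r = ⟨{Atom1.y i}, {Atom1.w}, ∅⟩)
    ∨ (∃ i : Fin m, r = ⟨{Atom1.z i}, {Atom1.w}, ∅⟩)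
    ∨ (∃ i : Fin n, r = ⟨{Atom1.x i}, {Atom1.w}, ∅⟩)
    ∨ (∃ i : Fin n, r = ⟨{Atom1.v i}, {Atom1.w}, ∅⟩)
    ∨ (∃ (i : Fin n) (j : Fin k), r = ⟨{Atom1.x i}, {Atom1.xj j i}, ∅⟩)
    ∨ (∃ i : Fin n,
        r = ⟨{Atom1.v i}, ∅, Finset.univ.image (fun j : Fin k => Atom1.xj j i)⟩)
    ∨ (∃ l : Fin u,
        r = ⟨{Atom1.w}, {sigma1 k (δ l 0), sigma1 k (δ l 1), sigma1 k (δ l 2)}, ∅⟩)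
    ∨ r = ⟨{Atom1.w}, ∅, {Atom1.w}⟩}

lemma isModel_reduct_iff {n m k u : ℕ} (δ : Fin u → Fin 3 → (Fin n ⊕ Fin m) × Bool)
    (M N : Set (Atom1 n m k)) :
    isModel (reduct (prog1 k δ) M) N ↔
      (∀ j, ∃ i, Atom1.xj j i ∈ N) ∧
      (∀ i j j', j < j' → Atom1.xj j i ∈ N → Atom1.xj j' i ∈ N → False) ∧
      (∀ i, Atom1.y i ∈ N ∨ Atom1.z i ∈ N) ∧
      (∀ i, Atom1.y i ∈ N → Atom1.z i ∈ N → Atom1.w ∈ N) ∧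
      (∀ i, Atom1.w ∈ N → Atom1.y i ∈ N) ∧
      (∀ i, Atom1.w ∈ N → Atom1.z i ∈ N) ∧
      (∀ i, Atom1.w ∈ N → Atom1.x i ∈ N) ∧
      (∀ i, Atom1.w ∈ N → Atom1.v i ∈ N) ∧
      (∀ i j, Atom1.xj j i ∈ N → Atom1.x i ∈ N) ∧
      (∀ i, (∀ j, Atom1.xj j i ∉ M) → Atom1.v i ∈ N) ∧
      (∀ l, (∀ d, sigma1 k (δ l d) ∈ N) → Atom1.w ∈ N) ∧
      (Atom1.w ∉ M → Atom1.w ∈ N) := by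
  have key : isModel (reduct (prog1 k δ) M) N ↔
      ∀ r ∈ prog1 k δ, (∀ c ∈ r.neg, c ∉ M) → (∀ b ∈ r.pos, b ∈ N) → ∃ a ∈ r.head, a ∈ N := by
    constructor
    · intro h r hr hc
      exact h ⟨r.head, r.pos, ∅⟩ ⟨r, hr, hc, rfl⟩
    · rintro h _ ⟨r, hr, hc, rfl⟩
      exact h r hr hc
  rw [key]
  simp only [prog1, Set.mem_setOf_eq]
  constructor
  · intro h
    refine ⟨fun j => ?_, fun i j j' hj => ?_, fun i => ?_, fun i => ?_, fun i => ?_, fun i => ?_,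
      fun i => ?_, fun i => ?_, fun i j => ?_, fun i => ?_, fun l => ?_, ?_⟩
    · simpa [guessRule1] using h _ (Or.inl ⟨j, rfl⟩)
    · simpa using h _ (Or.inr <| Or.inl ⟨i, j, j', hj, rfl⟩)
    · simpa using h _ (Or.inr <| Or.inr <| Or.inl ⟨i, rfl⟩)
    · simpa using h _ (Or.inr <| Or.inr <| Or.inr <| Or.inl ⟨i, rfl⟩)
    · simpa using h _ (Or.inr <| Or.inr <| Or.inr <| Or.inr <| Or.inl ⟨i, rfl⟩)
    · simpa using h _ (Or.inr <| Or.inr <| Or.inr <| Or.inr <| Or.inr <| Or.inl ⟨i, rfl⟩)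
    · simpa using h _ (Or.inr <| Or.inr <| Or.inr <| Or.inr <| Or.inr <| Or.inr <| Or.inl ⟨i, rfl⟩)
    · simpa using h _ (Or.inr <| Or.inr <| Or.inr <| Or.inr <| Or.inr <| Or.inr <| Or.inr <|
        Or.inl ⟨i, rfl⟩)
    · simpa using h _ (Or.inr <| Or.inr <| Or.inr <| Or.inr <| Or.inr <| Or.inr <| Or.inr <|
        Or.inr <| Or.inl ⟨i, j, rfl⟩)
    · simpa using h _ (Or.inr <| Or.inr <| Or.inr <| Or.inr <| Or.inr <| Or.inr <| Or.inr <|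
        Or.inr <| Or.inr <| Or.inl ⟨i, rfl⟩)
    · have := h _ (Or.inr <| Or.inr <| Or.inr <| Or.inr <| Or.inr <| Or.inr <| Or.inr <|
        Or.inr <| Or.inr <| Or.inr <| Or.inl ⟨l, rfl⟩)
      intro hd
      simpa [hd] using this
    · simpa using h _ (Or.inr <| Or.inr <| Or.inr <| Or.inr <| Or.inr <| Or.inr <| Or.inr <|
        Or.inr <| Or.inr <| Or.inr <| Or.inr rfl)
  · rintro ⟨h1, h2, h3, h4, h5, h6, h7, h8, h9, h10, h11, h12⟩ r hr
    rcases hr with ⟨j, rfl⟩ | ⟨i, j, j', hj, rfl⟩ | ⟨i, rfl⟩ | ⟨i, rfl⟩ | ⟨i, rfl⟩ | ⟨i, rfl⟩ |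
      ⟨i, rfl⟩ | ⟨i, rfl⟩ | ⟨i, j, rfl⟩ | ⟨i, rfl⟩ | ⟨l, rfl⟩ | rfl
    · simpa [guessRule1] using h1 j
    · simpa using h2 i j j' hj
    · simpa using h3 i
    · simpa using h4 i
    · simpa using h5 i
    · simpa using h6 i
    · simpa using h7 i
    · simpa using h8 i
    · simpa using h9 i j
    · simpa using h10 i
    · have := h11 l
      simpa [Fin.forall_fin_succ] using this
    · simpa using h12

lemma comp_iff {n m k u : ℕ} (hn : 2 ≤ n)
    (δ : Fin u → Fin 3 → (Fin n ⊕ Fin m) × Bool) (a : Atom1 n m k) :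
    Compulsory (prog1 k δ) a ↔ ∀ j i, a ≠ Atom1.xj j i := by
  have hw : Compulsory (prog1 k δ) Atom1.w := by
    apply Compulsory.loop
    simp [prog1]
  constructor
  · rintro (⟨_, h⟩ | ⟨r, _, hr, hh, -, -⟩) j i rfl
    · simp [prog1, guessRule1] at h
    · rcases hr with ⟨j', rfl⟩ | ⟨i, j, j', hj, rfl⟩ | ⟨i, rfl⟩ | ⟨i, rfl⟩ | ⟨i, rfl⟩ | ⟨i, rfl⟩ |
        ⟨i, rfl⟩ | ⟨i, rfl⟩ | ⟨i, j, rfl⟩ | ⟨i, rfl⟩ | ⟨l, rfl⟩ | rfl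
      · have h0 : Atom1.xj j' ⟨0, by omega⟩ ∈ (guessRule1 n m j').head := by simp [guessRule1]
        have h1 : Atom1.xj j' ⟨1, by omega⟩ ∈ (guessRule1 n m j').head := by simp [guessRule1]
        rw [hh, Finset.mem_singleton] at h0 h1
        have := h0.trans h1.symm
        simp at this
      · simp [Finset.ext_iff] at hh
      · have := (Finset.ext_iff.1 hh (Atom1.xj _ _)).2 (Finset.mem_singleton_self _)
        simp at this
      all_goals simp at hh
  · intro h
    cases a with
    | w => exact hw
    | x i => exact Compulsory.rule ⟨{Atom1.x i}, {Atom1.w}, ∅⟩ _ (by simp [prog1]) rfl rfl (by simpa)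
    | v i => exact Compulsory.rule ⟨{Atom1.v i}, {Atom1.w}, ∅⟩ _ (by simp [prog1]) rfl rfl (by simpa)
    | y i => exact Compulsory.rule ⟨{Atom1.y i}, {Atom1.w}, ∅⟩ _ (by simp [prog1]) rfl rfl (by simpa)
    | z i => exact Compulsory.rule ⟨{Atom1.z i}, {Atom1.w}, ∅⟩ _ (by simp [prog1]) rfl rfl (by simpa)
    | xj j i => exact absurd rfl (h j i)

lemma guess_mem {n m k u : ℕ} (δ : Fin u → Fin 3 → (Fin n ⊕ Fin m) × Bool) (j : Fin k) :
    guessRule1 n m j ∈ prog1 k δ := Or.inl ⟨j, rfl⟩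

lemma mem_progAtoms {n m k u : ℕ} (δ : Fin u → Fin 3 → (Fin n ⊕ Fin m) × Bool)
    (a : Atom1 n m k) : a ∈ progAtoms (prog1 k δ) := by
  cases a with
  | w => exact ⟨⟨{Atom1.w}, ∅, {Atom1.w}⟩, by simp [prog1], by simp⟩
  | x i => exact ⟨⟨{Atom1.x i}, {Atom1.w}, ∅⟩, by simp [prog1], by simp⟩
  | v i => exact ⟨⟨{Atom1.v i}, {Atom1.w}, ∅⟩, by simp [prog1], by simp⟩
  | y i => exact ⟨⟨{Atom1.y i}, {Atom1.w}, ∅⟩, by simp [prog1], by simp⟩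
  | z i => exact ⟨⟨{Atom1.z i}, {Atom1.w}, ∅⟩, by simp [prog1], by simp⟩
  | xj j i => exact ⟨guessRule1 n m j, guess_mem δ j, by simp [guessRule1]⟩

/-- The atoms of a combined assignment together with a choice `f` of indices. -/
def asgSet {n m k : ℕ} (f : Fin k → Fin n) (α : Fin n → Bool) (β : Fin m → Bool) :
    Atom1 n m k → Prop
  | .x i => α i = true
  | .v i => α i = false
  | .y i => β i = true
  | .z i => β i = false
  | .w => False
  | .xj j i => f j = i

/-- All compulsory atoms together with a choice `f` of indices. -/
def fullSet {n k : ℕ} (m : ℕ) (f : Fin k → Fin n) : Atom1 n m k → Prop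
  | .xj j i => f j = i
  | _ => True

lemma sigma_asg {n m k : ℕ} (f : Fin k → Fin n) (α : Fin n → Bool) (β : Fin m → Bool)
    (l : (Fin n ⊕ Fin m) × Bool) :
    asgSet f α β (sigma1 k l) ↔ Sum.elim α β l.1 = l.2 := by
  rcases l with ⟨i | i, _ | _⟩ <;> simp [sigma1, asgSet]

lemma answer_of_sat {n m k u : ℕ} (δ : Fin u → Fin 3 → (Fin n ⊕ Fin m) × Bool)
    (α : Fin n → Bool) (hα : weight α = k)
    (h : ∀ β : Fin m → Bool, ∃ l : Fin u, ∀ d : Fin 3, Sum.elim α β (δ l d).1 = (δ l d).2) :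
    ∃ M : Set (Atom1 n m k), isAnswerSet (prog1 k δ) M := by
  classical
  obtain ⟨f, hfi, hfr⟩ : ∃ f : Fin k → Fin n, Function.Injective f ∧
      ∀ i, α i = true ↔ ∃ j, f j = i := by
    refine ⟨Finset.orderEmbOfFin _ hα, (Finset.orderEmbOfFin _ hα).injective, fun i => ?_⟩
    have := Finset.range_orderEmbOfFin _ hα
    have := Set.ext_iff.1 this i
    simpa using this.symm
  refine ⟨{a | fullSet m f a}, fun a _ => mem_progAtoms δ a, ?_, ?_⟩
  · rw [isModel_reduct_iff]
    simp only [Set.mem_setOf_eq, fullSet]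
    refine ⟨by simp, ?_, by simp, by simp, by simp, by simp, by simp, by simp, by simp, by simp,
      by simp, by simp⟩
    intro i j j' hj h1 h2
    exact hj.ne (hfi (h1.trans h2.symm))
  · intro N hN hmod
    apply hN.2
    rw [isModel_reduct_iff] at hmod
    obtain ⟨h1, h2, h3, h4, h5, h6, h7, h8, h9, h10, h11, h12⟩ := hmod
    have hf : ∀ j, Atom1.xj j (f j) ∈ N := by
      intro j
      obtain ⟨i, hi⟩ := h1 j
      have : f j = i := hN.1 hi
      rwa [this]
    have hw : Atom1.w ∈ N := by
      obtain ⟨l, hl⟩ := h (fun i => decide (Atom1.y i ∈ N))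
      refine h11 l fun d => ?_
      have hd := hl d
      rcases hδ : δ l d with ⟨i | i, _ | _⟩ <;> rw [hδ] at hd <;> simp at hd <;>
        simp only [sigma1]
      · apply h10
        intro j hj
        have : α i = true := (hfr i).2 ⟨j, hj⟩
        simp [hd] at this
      · obtain ⟨j, rfl⟩ := (hfr i).1 hd
        exact h9 _ j (hf j)
      · exact (h3 i).resolve_left hd
      · exact hd
    intro a ha
    cases a with
    | w => exact hw
    | x i => exact h7 i hw
    | v i => exact h8 i hw
    | y i => exact h5 i hw
    | z i => exact h6 i hw
    | xj j i =>
      have : f j = i := ha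
      exact this ▸ hf j

lemma sat_of_answer {n m k u : ℕ} (δ : Fin u → Fin 3 → (Fin n ⊕ Fin m) × Bool)
    (M : Set (Atom1 n m k)) (hM : isAnswerSet (prog1 k δ) M) :
    ∃ α : Fin n → Bool, weight α = k ∧
      ∀ β : Fin m → Bool, ∃ l : Fin u, ∀ d : Fin 3, Sum.elim α β (δ l d).1 = (δ l d).2 := by
  classical
  obtain ⟨-, hmod, hmin⟩ := hM
  rw [isModel_reduct_iff] at hmod
  obtain ⟨h1, h2, h3, h4, h5, h6, h7, h8, h9, h10, h11, h12⟩ := hmod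
  have hw : Atom1.w ∈ M := by
    by_contra hw
    exact hw (h12 hw)
  choose f hf using h1
  have hfi : Function.Injective f := by
    intro j j' hj
    rcases lt_trichotomy j j' with hlt | heq | hlt
    · exact (h2 _ _ _ hlt (hf j) (hj ▸ hf j')).elim
    · exact heq
    · exact (h2 _ _ _ hlt (hf j') (hj ▸ hf j)).elim
  refine ⟨fun i => decide (∃ j, f j = i), ?_, fun β => ?_⟩
  · have : (Finset.univ.filter fun i => decide (∃ j, f j = i) = true) = Finset.univ.image f := by
      ext i
      simp
    rw [weight, this, Finset.card_image_of_injective _ hfi]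
    simp
  · by_contra hβ
    push Not at hβ
    set α : Fin n → Bool := fun i => decide (∃ j, f j = i) with hα
    apply hmin {a | asgSet f α β a}
    · refine ⟨?_, fun hsub => hsub hw⟩
      intro a ha
      cases a with
      | w => exact hw
      | x i => exact h7 i hw
      | v i => exact h8 i hw
      | y i => exact h5 i hw
      | z i => exact h6 i hw
      | xj j i =>
        have : f j = i := ha
        exact this ▸ hf j
    · rw [isModel_reduct_iff]
      simp only [Set.mem_setOf_eq, sigma_asg]
      simp only [asgSet]
      refine ⟨by simp, ?_, ?_, by simp, by simp, by simp, by simp, by simp, ?_, ?_, ?_, ?_⟩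
      · intro i j j' hj h1 h2
        exact hj.ne (hfi (h1.trans h2.symm))
      · intro i
        cases β i <;> simp
      · intro i j hj
        simpa [hα] using ⟨j, hj⟩
      · intro i hi
        simp only [hα, decide_eq_false_iff_not]
        rintro ⟨j, rfl⟩
        exact hi j (hf j)
      · intro l hl
        obtain ⟨d, hd⟩ := hβ l
        exact hd (hl d)
      · exact fun h => h hw

/-- Correctness of the reduction from ∃ᵏ∀*-WSat(3DNF) to ASP-consistency parameterized
by the number of contingent rules: the compulsory atoms of the constructed program `P`
are exactly `{w} ∪ {x_i, v_i} ∪ {y_i, z_i}`, the contingent rules of `P` are exactly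
the `k` guessing rules `(x^j_1 ∨ … ∨ x^j_n ←)`, and there is a weight-`k` assignment
`α` to `X` such that every assignment `β` to `Y` makes `α ∪ β` satisfy `ψ` iff `P`
has an answer set. -/
theorem statement1 {n m k u : ℕ} (hk : 1 ≤ k) (hn : 2 ≤ n)
    (δ : Fin u → Fin 3 → (Fin n ⊕ Fin m) × Bool) :
    ({a : Atom1 n m k | Compulsory (prog1 k δ) a}
        = {a : Atom1 n m k | a = Atom1.w ∨ (∃ i, a = Atom1.x i) ∨ (∃ i, a = Atom1.v i)
            ∨ (∃ i, a = Atom1.y i) ∨ (∃ i, a = Atom1.z i)}) ∧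
    ({r : Rule (Atom1 n m k) | isContingentRule (prog1 k δ) r}
        = Set.range (guessRule1 n m (k := k))) ∧
    Function.Injective (guessRule1 n m (k := k)) ∧
    ((∃ α : Fin n → Bool, weight α = k ∧
        ∀ β : Fin m → Bool, ∃ l : Fin u, ∀ d : Fin 3,
          Sum.elim α β (δ l d).1 = (δ l d).2) ↔
      ∃ M : Set (Atom1 n m k), isAnswerSet (prog1 k δ) M) := by
  have hc := comp_iff (k := k) hn δ
  refine ⟨?_, ?_, ?_, ?_⟩
  · ext a
    simp only [Set.mem_setOf_eq, hc]
    cases a <;> simp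
  · ext r
    simp only [Set.mem_setOf_eq, isContingentRule, ContingentAtoms, Set.mem_diff, hc, Set.mem_range]
    constructor
    · rintro ⟨hr, a, har, -, ha⟩
      push Not at ha
      obtain ⟨j, i, rfl⟩ := ha
      rcases hr with ⟨j, rfl⟩ | ⟨i, j, j', hj, rfl⟩ | ⟨i, rfl⟩ | ⟨i, rfl⟩ | ⟨i, rfl⟩ | ⟨i, rfl⟩ |
        ⟨i, rfl⟩ | ⟨i, rfl⟩ | ⟨i, j, rfl⟩ | ⟨i, rfl⟩ | ⟨l, rfl⟩ | rfl
      · exact ⟨j, rfl⟩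
      all_goals simp at har
    · rintro ⟨j, rfl⟩
      refine ⟨guess_mem δ j, Atom1.xj j ⟨0, by omega⟩, by simp [guessRule1],
        mem_progAtoms δ _, fun h => h _ _ rfl⟩
  · intro j j' h
    have h0 : Atom1.xj j ⟨0, by omega⟩ ∈ (guessRule1 n m j).head := by simp [guessRule1]
    rw [h] at h0
    simp [guessRule1] at h0
    exact h0.symm
  · constructor
    · rintro ⟨α, hα, h⟩
      exact answer_of_sat δ α hα h
    · rintro ⟨M, hM⟩
      exact sat_of_answer δ M hM
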